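/- arXiv:1901.06480 — 2 statements merged into one kernel-verified Lean document; each statement's English description precedes it below -/
import Mathlib

section
/- If G is a finite uniformly generated group, then G is supersolvable. -/
/-- A chain `⊥ = c 0 < c 1 < ⋯ < c n = ⊤` of subgroups is *unrefinable* if each
`c i` is maximal in `c (i+1)` (i.e. consecutive terms form a covering pair). -/
def IsUnrefinableChain {G : Type*} [Group G] {n : ℕ} (c : Fin (n + 1) → Subgroup G) : Prop :=
  c 0 = ⊥ ∧ c (Fin.last n) = ⊤ ∧ ∀ i : Fin n, c i.castSucc ⋖ c i.succ

/-- The length `ℓ(G)`: the maximal length of an unrefinable chain of subgroups. -/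
noncomputable def groupLength (G : Type*) [Group G] : ℕ :=
  sSup {n | ∃ c : Fin (n + 1) → Subgroup G, IsUnrefinableChain c}

/-- The depth `λ(G)`: the minimal length of an unrefinable chain of subgroups. -/
noncomputable def groupDepth (G : Type*) [Group G] : ℕ :=
  sInf {n | ∃ c : Fin (n + 1) → Subgroup G, IsUnrefinableChain c}

/-- `d(G)`: the minimal number of generators of `G`. -/
noncomputable def minGen (G : Type*) [Group G] : ℕ :=
  sInf {n | ∃ S : Finset G, S.card = n ∧ Subgroup.closure (S : Set G) = ⊤}

/-- `m(G)`: the maximal size of an independent generating set of `G`. -/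
noncomputable def maxIndep (G : Type*) [Group G] : ℕ :=
  sSup {n | ∃ S : Finset G, S.card = n ∧ Subgroup.closure (S : Set G) = ⊤ ∧
    ∀ a ∈ S, Subgroup.closure ((S : Set G) \ {a}) < ⊤}

/-- Given a tuple `x : Fin d → G`, the chain of subgroups
`⟨⟩ ≤ ⟨x 0⟩ ≤ ⟨x 0, x 1⟩ ≤ ⋯ ≤ ⟨x 0, …, x (d-1)⟩`. -/
def partialClosure {G : Type*} [Group G] {d : ℕ} (x : Fin d → G) (i : Fin (d + 1)) :
    Subgroup G :=
  Subgroup.closure (x '' {j | (j : ℕ) < (i : ℕ)})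

/-- `G` is *`d`-uniformly generated* if strictly ascending chains
`1 < ⟨x 1⟩ < ⋯ < ⟨x 1, …, x d⟩` exist, and every such chain ends at `G`. -/
def DUnifGen (G : Type*) [Group G] (d : ℕ) : Prop :=
  (∃ x : Fin d → G, StrictMono (partialClosure x)) ∧
  ∀ x : Fin d → G, StrictMono (partialClosure x) → Subgroup.closure (Set.range x) = ⊤

/-- `G` is *uniformly generated* if it is `d(G)`-uniformly generated. -/
def UniformlyGenerated (G : Type*) [Group G] : Prop :=
  DUnifGen G (minGen G)

/-- `G` is elementary abelian: isomorphic to `(C_p)^k` for some prime `p`. -/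
def IsElementaryAbelian (G : Type*) [Group G] : Prop :=
  ∃ (p k : ℕ), p.Prime ∧ Nonempty (G ≃* (Fin k → Multiplicative (ZMod p)))

/-- `G` is supersolvable: it has a normal series (all terms normal in `G`)
with cyclic factors (each step is obtained by adjoining a single element). -/
def IsSupersolvableGroup (G : Type*) [Group G] : Prop :=
  ∃ (n : ℕ) (c : Fin (n + 1) → Subgroup G),
    c 0 = ⊥ ∧ c (Fin.last n) = ⊤ ∧ Monotone c ∧ (∀ i, (c i).Normal) ∧
    ∀ i : Fin n, ∃ g : G, c i.succ = c i.castSucc ⊔ Subgroup.zpowers g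

/-- `G` is isomorphic to `(C_p)^{k} ⋊ C_q` where `C_q` acts by a nontrivial scalar:
expressed internally via a normal elementary abelian `p`-subgroup `N`, an element `g`
of order `q` complementing it, whose conjugation action raises every element of `N`
to a fixed power `c` which is a nontrivial scalar of multiplicative order `q` mod `p`. -/
def IsScalarExtension (G : Type*) [Group G] : Prop :=
  ∃ (p q : ℕ), p.Prime ∧ q.Prime ∧
    ∃ (N : Subgroup G) (g : G) (c : ℕ),
      N.Normal ∧ (∀ a ∈ N, ∀ b ∈ N, a * b = b * a) ∧ (∀ a ∈ N, a ^ p = 1) ∧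
      orderOf g = q ∧
      N ⊔ Subgroup.zpowers g = ⊤ ∧ N ⊓ Subgroup.zpowers g = ⊥ ∧
      (∀ n ∈ N, g * n * g⁻¹ = n ^ c) ∧
      c % p ≠ 1 % p ∧ c ^ q % p = 1 % p

/-- Every strictly increasing chain of subgroups inside a subgroup generated by `n` elements
has length at most `n`. -/
def GeneratorsBoundChains (G : Type*) [Group G] : Prop :=
  ∀ (S : Finset G) (t : LTSeries (Subgroup G)),
    t.last = Subgroup.closure (S : Set G) → t.length ≤ S.card

theorem DUnifGen.length_le {G : Type*} [Group G] {d : ℕ} (hG : DUnifGen G d)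
    (t : LTSeries (Subgroup G)) : t.length ≤ d := by
  by_contra! hd
  have hstep (i : Fin d) : ∃ y, y ∈ t ⟨i + 1, by omega⟩ ∧ y ∉ t ⟨i, by omega⟩ :=
    SetLike.exists_of_lt (t.strictMono (by simp [Fin.lt_def]))
  choose x hx hx' using hstep
  have hle (i : ℕ) (hi : i ≤ d) : Subgroup.closure (x '' {j | (j : ℕ) < i}) ≤
      t ⟨i, by omega⟩ := by
    rw [Subgroup.closure_le]
    rintro _ ⟨j, hj, rfl⟩
    exact t.monotone (by simpa [Fin.le_def] using Nat.succ_le_of_lt hj) (hx j)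
  have hmono : StrictMono (partialClosure x) := by
    refine Fin.strictMono_iff_lt_succ.2 fun i => lt_of_le_of_ne ?_ fun h => hx' i ?_
    · refine Subgroup.closure_mono (Set.image_mono fun j hj => ?_)
      simp only [Set.mem_ofPred_eq, Fin.val_castSucc, Fin.val_succ] at hj ⊢
      omega
    · have hmem : x i ∈ partialClosure x i.succ :=
        Subgroup.subset_closure ⟨i, by simp, rfl⟩
      rw [← h] at hmem
      exact hle i i.2.le hmem
  have htop := hG.2 x hmono
  have hlast : Subgroup.closure (Set.range x) ≤ t ⟨d, by omega⟩ := by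
    simpa [Set.image_univ] using hle d le_rfl
  have hlt : t ⟨d, by omega⟩ < t ⟨d + 1, by omega⟩ := t.strictMono (by simp [Fin.lt_def])
  rw [htop] at hlast
  exact not_top_lt (hlast.trans_lt hlt)

theorem exists_ltSeries_minGen_le {G : Type*} [Group G] [Finite G] (S : Finset G) :
    ∃ s : LTSeries (Subgroup G), s.head = Subgroup.closure (S : Set G) ∧
      minGen G ≤ S.card + s.length := by
  classical
  induction h : Subgroup.closure (S : Set G) using WellFoundedGT.induction generalizing S with
  | ind C ih =>
    subst h
    by_cases htop : Subgroup.closure (S : Set G) = ⊤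
    · exact ⟨RelSeries.singleton _ _, rfl, Nat.sInf_le ⟨S, rfl, htop⟩⟩
    · obtain ⟨g, -, hg⟩ := SetLike.exists_of_lt (lt_top_iff_ne_top.2 htop)
      have hlt : Subgroup.closure (S : Set G) < Subgroup.closure (insert g S : Finset G) := by
        refine lt_of_le_of_ne (Subgroup.closure_mono (by simp)) fun h => hg ?_
        rw [h]
        exact Subgroup.subset_closure (by simp)
      obtain ⟨s, hs, hcard⟩ := ih _ hlt _ rfl
      refine ⟨s.cons (Subgroup.closure (S : Set G)) (by rw [hs]; exact hlt), by simp, ?_⟩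
      have := Finset.card_insert_le g S
      simp only [RelSeries.cons_length]
      omega

theorem UniformlyGenerated.generatorsBoundChains {G : Type*} [Group G] [Finite G]
    (hG : UniformlyGenerated G) : GeneratorsBoundChains G := by
  intro S t ht
  obtain ⟨s, hs, hcard⟩ := exists_ltSeries_minGen_le S
  have := DUnifGen.length_le hG (t.smash s (ht.trans hs.symm))
  simp only [RelSeries.smash_length] at this
  omega

theorem GeneratorsBoundChains.quotient_zpowers {G : Type*} [Group G]
    (hG : GeneratorsBoundChains G) {x : G} (hx : x ≠ 1) [(Subgroup.zpowers x).Normal] :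
    GeneratorsBoundChains (G ⧸ Subgroup.zpowers x) := by
  classical
  intro S t ht
  let f := QuotientGroup.mk' (Subgroup.zpowers x)
  have hf : Function.Surjective f := QuotientGroup.mk'_surjective _
  let u := t.map (Subgroup.comap f) fun A B h => (Subgroup.comap_lt_comap_of_surjective hf).2 h
  have hu : ⊥ < u.head := by
    refine (bot_lt_iff_ne_bot.2 (Subgroup.zpowers_ne_bot.2 hx)).trans_le ?_
    rw [← QuotientGroup.ker_mk' (Subgroup.zpowers x)]
    exact MonoidHom.ker_le_comap _ _
  let T : Finset G := insert x (S.image (Function.surjInv hf))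
  have hT : Subgroup.closure (T : Set G) = u.last := by
    have himage : f '' (Function.surjInv hf '' (S : Set (G ⧸ Subgroup.zpowers x))) = S := by
      simp [Set.image_image, Function.surjInv_eq hf]
    change _ = t.last.comap f
    rw [ht, ← himage, ← MonoidHom.map_closure, Subgroup.comap_map_eq,
      QuotientGroup.ker_mk', sup_comm, Finset.coe_insert, Finset.coe_image, Set.insert_eq,
      Subgroup.closure_union, ← Subgroup.zpowers_eq_closure]
  have hlen := hG T (u.cons ⊥ hu) (by rw [hT]; simp)
  have hcard : T.card ≤ S.card + 1 :=
    (Finset.card_insert_le _ _).trans (Nat.add_le_add_right Finset.card_image_le _)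
  simp only [RelSeries.cons_length] at hlen
  have : u.length = t.length := rfl
  omega

theorem GeneratorsBoundChains.not_lt_lt_closure_pair {G : Type*} [Group G]
    (hG : GeneratorsBoundChains G) {x y : G}
    {A B : Subgroup (Subgroup.closure ({x, y} : Set G))} (hA : ⊥ < A) (hAB : A < B) :
    B = ⊤ := by
  classical
  by_contra hB
  let s : LTSeries (Subgroup (Subgroup.closure ({x, y} : Set G))) :=
    LTSeries.mk 3 ![⊥, A, B, ⊤] <| Fin.strictMono_iff_lt_succ.2 fun i => by
      fin_cases i
      exacts [hA, hAB, lt_top_iff_ne_top.2 hB]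
  have hmap : StrictMono (Subgroup.map (Subgroup.closure ({x, y} : Set G)).subtype) :=
    fun C D h => (Subgroup.map_lt_map_iff_of_injective (Subgroup.subtype_injective _)).2 h
  have hlen := hG {x, y} (s.map _ hmap) (by
    have hs : s.last = ⊤ := rfl
    rw [LTSeries.last_map, hs, ← MonoidHom.range_eq_map, Subgroup.range_subtype]
    simp)
  have hcard : Finset.card {x, y} ≤ 2 := Finset.card_le_two
  have : (s.map _ hmap).length = 3 := rfl
  omega

section LengthTwo

variable {H : Type*} [Group H] [Finite H]

theorem card_prime_of_chains_short
    (hH : ∀ A B : Subgroup H, ⊥ < A → A < B → B = ⊤) {A : Subgroup H} (hA : A ≠ ⊥)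
    (hA' : A ≠ ⊤) : (Nat.card A).Prime := by
  obtain ⟨q, hq, hdvd⟩ := Nat.exists_prime_and_dvd (fun h => hA (Subgroup.card_eq_one.1 h))
  have := Fact.mk hq
  obtain ⟨a, ha⟩ := exists_prime_orderOf_dvd_card' q hdvd
  have ha' : orderOf (a : H) = q := by rw [Subgroup.orderOf_coe, ha]
  have hne : (a : H) ≠ 1 := fun h => hq.ne_one (by rw [← ha', h, orderOf_one])
  rcases (Subgroup.zpowers_le.2 a.2).lt_or_eq with hlt | heq
  · exact absurd (hH _ _ (bot_lt_iff_ne_bot.2 (Subgroup.zpowers_ne_bot.2 hne)) hlt) hA'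
  · rwa [← heq, Nat.card_zpowers, ha']

theorem isSolvable_of_chains_short
    (hH : ∀ A B : Subgroup H, ⊥ < A → A < B → B = ⊤) : Group.IsSolvable H := by
  by_cases h : ∃ p : ℕ, p.Prime ∧ ∃ P : Sylow p H, (P : Subgroup H) = ⊤
  · obtain ⟨p, hp, P, hP⟩ := h
    have := Fact.mk hp
    have hpH : IsPGroup p H := by
      have := P.isPGroup'
      rw [hP] at this
      exact this.of_equiv Subgroup.topEquiv
    have := hpH.isNilpotent
    infer_instance
  · push Not at h
    have : IsZGroup H := ⟨fun p hp P => by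
      have := Fact.mk hp
      by_cases hP : (P : Subgroup H) = ⊥
      · have : Subsingleton (P : Subgroup H) := by rw [hP]; infer_instance
        exact isCyclic_of_subsingleton
      · have := Fact.mk (card_prime_of_chains_short hH hP (h p hp P))
        exact isCyclic_of_prime_card rfl⟩
    infer_instance

theorem normal_zpowers_of_chains_short
    (hH : ∀ A B : Subgroup H, ⊥ < A → A < B → B = ⊤) {x : H} (hx : (orderOf x).Prime)
    (hmax : ∀ q : ℕ, q.Prime → q ∣ Nat.card H → q ≤ orderOf x) :
    (Subgroup.zpowers x).Normal := by
  have hne : x ≠ 1 := fun h => hx.ne_one (by rw [h, orderOf_one])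
  have hxbot : ⊥ < Subgroup.zpowers x := bot_lt_iff_ne_bot.2 (Subgroup.zpowers_ne_bot.2 hne)
  have : Nontrivial H := ⟨x, 1, hne⟩
  have := isSolvable_of_chains_short hH
  by_cases hbot : commutator H = ⊥
  · have := (commutator_eq_bot_iff H).1 hbot
    infer_instance
  have hK := card_prime_of_chains_short hH hbot
    (Group.IsSolvable.commutator_lt_top_of_nontrivial H).ne
  by_cases hle : commutator H ≤ Subgroup.zpowers x
  · have heq : commutator H = Subgroup.zpowers x :=
      Subgroup.eq_of_le_of_card_ge hle (((Nat.prime_dvd_prime_iff_eq hK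
        (by rwa [Nat.card_zpowers])).1 (Subgroup.card_dvd_of_le hle)).ge)
    rw [← heq]
    infer_instance
  have hsup : Subgroup.zpowers x ⊔ commutator H = ⊤ := hH _ _ hxbot (left_lt_sup.2 hle)
  have hinf : commutator H ⊓ Subgroup.zpowers x = ⊥ := by
    by_contra h
    rcases (inf_le_left : commutator H ⊓ Subgroup.zpowers x ≤ _).lt_or_eq with hlt | heq
    · exact (Group.IsSolvable.commutator_lt_top_of_nontrivial H).ne
        (hH _ _ (bot_lt_iff_ne_bot.2 h) hlt)
    · exact hle (inf_eq_left.1 heq)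
  have hindex : (commutator H).index = orderOf x := by
    rw [← Subgroup.relIndex_top_right, ← hsup, Subgroup.relIndex_sup_right,
      ← Subgroup.inf_relIndex_right, hinf, Subgroup.relIndex_bot_left, Nat.card_zpowers]
  have hcard : Nat.card H = Nat.card (commutator H) * orderOf x := by
    rw [← hindex, Subgroup.card_mul_index]
  have hindex' : (Subgroup.zpowers x).index = Nat.card (commutator H) := by
    have := (Subgroup.zpowers x).card_mul_index
    rw [Nat.card_zpowers, hcard, mul_comm] at this
    exact Nat.eq_of_mul_eq_mul_right hx.pos this
  refine Subgroup.normal_of_index_eq_minFac_card ?_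
  have hKx := hmax _ hK (Subgroup.card_subgroup_dvd_card _)
  rw [hindex', hcard]
  refine le_antisymm ((Nat.le_minFac.2 fun q hq hdvd => ?_).resolve_left fun h =>
      hx.ne_one (Nat.eq_one_of_mul_eq_one_left h))
    (Nat.minFac_le_of_dvd hK.two_le (dvd_mul_right _ _))
  rcases (Nat.Prime.dvd_mul hq).1 hdvd with h | h
  · exact ((Nat.prime_dvd_prime_iff_eq hq hK).1 h).ge
  · exact hKx.trans ((Nat.prime_dvd_prime_iff_eq hq hx).1 h).ge

end LengthTwo

theorem GeneratorsBoundChains.exists_normal_zpowers {G : Type*} [Group G] [Finite G]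
    [Nontrivial G] (hG : GeneratorsBoundChains G) :
    ∃ x : G, x ≠ 1 ∧ (Subgroup.zpowers x).Normal := by
  have hne : (Nat.card G).primeFactors.Nonempty :=
    Nat.nonempty_primeFactors.2 Finite.one_lt_card
  obtain ⟨p, hp, hmax⟩ := (Nat.card G).primeFactors.exists_max_image id hne
  have := Fact.mk (Nat.prime_of_mem_primeFactors hp)
  obtain ⟨x, hx⟩ := exists_prime_orderOf_dvd_card' p (Nat.dvd_of_mem_primeFactors hp)
  refine ⟨x, fun h => (Fact.out : p.Prime).ne_one (by rw [← hx, h, orderOf_one]), ?_⟩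
  have hconj (g : G) : g * x * g⁻¹ ∈ Subgroup.zpowers x := by
    let x' : Subgroup.closure ({x, g} : Set G) := ⟨x, Subgroup.subset_closure (by simp)⟩
    let g' : Subgroup.closure ({x, g} : Set G) := ⟨g, Subgroup.subset_closure (by simp)⟩
    have hx' : orderOf x' = p := by rw [← Subgroup.orderOf_coe]; exact hx
    have hnormal : (Subgroup.zpowers x').Normal := by
      refine normal_zpowers_of_chains_short (fun A B => hG.not_lt_lt_closure_pair)
        (by rw [hx']; exact Fact.out) fun q hq hdvd => ?_
      rw [hx']
      exact hmax q (Nat.mem_primeFactors.2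
        ⟨hq, hdvd.trans (Subgroup.card_subgroup_dvd_card _), Nat.card_pos.ne'⟩)
    obtain ⟨k, hk⟩ := hnormal.conj_mem x' (Subgroup.mem_zpowers x') g'
    exact ⟨k, by simpa [x', g'] using congrArg Subtype.val hk⟩
  refine ⟨fun _ ⟨k, hk⟩ g => ?_⟩
  subst hk
  rw [← conj_zpow]
  exact Subgroup.zpow_mem _ (hconj g) k

theorem IsSupersolvableGroup.of_quotient_zpowers {G : Type*} [Group G] {x : G}
    [(Subgroup.zpowers x).Normal] (h : IsSupersolvableGroup (G ⧸ Subgroup.zpowers x)) :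
    IsSupersolvableGroup G := by
  obtain ⟨n, c, hbot, htop, hmono, hnormal, hstep⟩ := h
  let f := QuotientGroup.mk' (Subgroup.zpowers x)
  have hf : Function.Surjective f := QuotientGroup.mk'_surjective _
  have hker (A : Subgroup (G ⧸ Subgroup.zpowers x)) : Subgroup.zpowers x ≤ A.comap f := by
    conv_lhs => rw [← QuotientGroup.ker_mk' (Subgroup.zpowers x)]
    exact MonoidHom.ker_le_comap _ _
  refine ⟨n + 1, Fin.cons ⊥ fun i => (c i).comap f, by simp, ?_, ?_, ?_, ?_⟩
  · rw [← Fin.succ_last, Fin.cons_succ, htop, Subgroup.comap_top]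
  · refine Fin.monotone_iff_le_succ.2 fun i => ?_
    cases i using Fin.cases with
    | zero => simp
    | succ i =>
      rw [← Fin.succ_castSucc, Fin.cons_succ, Fin.cons_succ]
      exact Subgroup.comap_mono (hmono i.castSucc_lt_succ.le)
  · intro i
    cases i using Fin.cases with
    | zero => simp
    | succ i => simpa using (hnormal i).comap f
  · intro i
    cases i using Fin.cases with
    | zero =>
      refine ⟨x, ?_⟩
      rw [Fin.castSucc_zero, Fin.cons_succ, Fin.cons_zero, hbot, bot_sup_eq]
      exact QuotientGroup.ker_mk' _
    | succ i =>
      obtain ⟨g, hg⟩ := hstep i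
      obtain ⟨g, rfl⟩ := hf g
      refine ⟨g, ?_⟩
      rw [← Fin.succ_castSucc, Fin.cons_succ, Fin.cons_succ, hg, ← MonoidHom.map_zpowers]
      conv_lhs => rw [← Subgroup.map_comap_eq_self_of_surjective hf (c i.castSucc)]
      rw [← Subgroup.map_sup, Subgroup.comap_map_eq_self]
      rw [QuotientGroup.ker_mk']
      exact (hker _).trans le_sup_left

theorem GeneratorsBoundChains.isSupersolvableGroup {G : Type*} [Group G] [Finite G]
    (hG : GeneratorsBoundChains G) : IsSupersolvableGroup G := by
  induction h : Nat.card G using Nat.strong_induction_on generalizing G with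
  | _ n ih =>
    subst h
    rcases subsingleton_or_nontrivial G with hs | hn
    · exact ⟨0, fun _ => ⊥, rfl, Subsingleton.elim _ _, monotone_const,
        fun _ => Subgroup.normal_bot, fun i => i.elim0⟩
    · obtain ⟨x, hx, hnormal⟩ := hG.exists_normal_zpowers
      refine .of_quotient_zpowers (x := x) (ih _ ?_ (hG.quotient_zpowers hx) rfl)
      rw [← Subgroup.index_eq_card, ← (Subgroup.zpowers x).card_mul_index]
      exact lt_mul_of_one_lt_left (Nat.pos_of_ne_zero Subgroup.index_ne_zero_of_finite)
        ((Subgroup.one_lt_card_iff_ne_bot _).2 (Subgroup.zpowers_ne_bot.2 hx))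

/-- a finite uniformly generated group is supersolvable. -/
theorem isSupersolvable_of_uniformlyGenerated (G : Type*) [Group G] [Finite G]
    (hG : UniformlyGenerated G) : IsSupersolvableGroup G :=
  hG.generatorsBoundChains.isSupersolvableGroup
end

section
/- A finite group G is uniformly generated if and only if either G ≅ (C_p)^d is an elementary abelian p-group, or G ≅ (C_p)^{d-1} ⋊ C_q where p and q are primes and C_q acts as a nontrivial scalar on (C_p)^{d-1}. -/
section

open Subgroup ArithmeticFunction

variable {G : Type*} [Group G]

/-- A finite group without a chain of subgroups `⊥ < A < B < ⊤` has order with at most two prime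
factors. -/
theorem cardFactors_card_le_two_of_forall_lt_eq_top {K : Type*} [Group K] [Finite K]
    (hK : ∀ A B : Subgroup K, ⊥ < A → A < B → B = ⊤) : cardFactors (Nat.card K) ≤ 2 := by
  have sub_prime : ∀ A : Subgroup K, A ≠ ⊥ → A ≠ ⊤ → (Nat.card A).Prime := by
    intro A hA hA'
    have hA1 : Nat.card A ≠ 1 := by rwa [Ne, Subgroup.card_eq_one]
    have : Fact (Nat.card A).minFac.Prime := ⟨Nat.minFac_prime hA1⟩
    obtain ⟨x, hx⟩ := exists_prime_orderOf_dvd_card' (G := A) _ (Nat.minFac_dvd (Nat.card A))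
    have hxA : zpowers (x : K) ≤ A := by simp
    rcases hxA.eq_or_lt with h | h
    · rw [← h, Nat.card_zpowers, orderOf_coe, hx]; exact this.out
    · refine absurd (hK _ _ ?_ h) hA'
      rw [bot_lt_iff_ne_bot, Ne, zpowers_eq_bot]
      intro h1
      have : orderOf (x : K) = 1 := by rw [h1, orderOf_one]
      rw [orderOf_coe, hx] at this
      exact Fact.out (p := (Nat.card A).minFac.Prime) |>.ne_one this
  rcases subsingleton_or_nontrivial K with h | h
  · simp
  by_cases hN : ∃ A : Subgroup K, A.Normal ∧ A ≠ ⊥ ∧ A ≠ ⊤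
  · obtain ⟨A, hn, hA, hA'⟩ := hN
    have hi : A.index ≠ 1 := by rwa [Ne, index_eq_one]
    have : Fact A.index.minFac.Prime := ⟨Nat.minFac_prime hi⟩
    obtain ⟨x, hx⟩ := exists_prime_orderOf_dvd_card' (G := K ⧸ A) _ (Nat.minFac_dvd A.index)
    have hx1 : zpowers x ≠ ⊥ := by
      rw [Ne, zpowers_eq_bot]
      rintro rfl
      rw [orderOf_one] at hx
      exact this.out.ne_one hx.symm
    have hlt : A < (zpowers x).comap (QuotientGroup.mk' A) := by
      have : (⊥ : Subgroup (K ⧸ A)).comap (QuotientGroup.mk' A) <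
          (zpowers x).comap (QuotientGroup.mk' A) :=
        (comap_lt_comap_of_surjective (QuotientGroup.mk'_surjective A)).2 (bot_lt_iff_ne_bot.2 hx1)
      simpa [MonoidHom.comap_bot] using this
    have htop := hK _ _ (bot_lt_iff_ne_bot.2 hA) hlt
    have : zpowers x = ⊤ := comap_injective (QuotientGroup.mk'_surjective A) (htop.trans rfl)
    have hip : A.index.Prime := by
      rw [index, ← card_top, ← this, Nat.card_zpowers, hx]; exact Fact.out
    rw [← A.card_mul_index, cardFactors_mul Nat.card_pos.ne' hip.ne_zero,
      cardFactors_apply_prime hip, cardFactors_apply_prime (sub_prime A hA hA')]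
  · push Not at hN
    have hs : IsSimpleGroup K := ⟨fun A hA => or_iff_not_imp_left.2 (hN A hA)⟩
    have hcomm : ∀ a b : K, a * b = b * a := by
      by_cases hP : ∃ (p : ℕ) (_ : Fact p.Prime), IsPGroup p K
      · obtain ⟨p, _, hp⟩ := hP
        have := hp.isNilpotent
        rw [IsSimpleGroup.comm_iff_isSolvable]
        infer_instance
      · push Not at hP
        have : IsZGroup K := by
          refine ⟨fun p hp P => ?_⟩
          have : Fact p.Prime := ⟨hp⟩
          by_cases h0 : (P : Subgroup K) = ⊥
          · rw [h0]; infer_instance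
          · have := sub_prime P h0 fun ht => hP p ⟨hp⟩ (by
              have := P.isPGroup'
              rw [ht] at this
              exact this.of_equiv topEquiv)
            have : Fact (Nat.card (P : Subgroup K)).Prime := ⟨this⟩
            exact isCyclic_of_prime_card rfl
        rw [IsSimpleGroup.comm_iff_isSolvable]
        infer_instance
    let _ : CommGroup K := { ‹Group K› with mul_comm := hcomm }
    rw [cardFactors_apply_prime (IsSimpleGroup.prime_card (α := K))]
    norm_num

theorem UniformlyGenerated.height_top_le (h : UniformlyGenerated G) :
    Order.height (⊤ : Subgroup G) ≤ minGen G := by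
  by_contra hlt
  have : ((minGen G + 1 : ℕ) : ℕ∞) ≤ Order.height (⊤ : Subgroup G) := by
    push_cast
    exact Order.add_one_le_of_lt (not_le.1 hlt)
  obtain ⟨s, -, hs⟩ := Order.exists_series_of_le_height _ this
  have hlt : ∀ i j : ℕ, (hi : i < j) → (hj : j < s.length + 1) →
      s ⟨i, by omega⟩ < s ⟨j, hj⟩ := fun i j hi hj => s.strictMono hi
  have hex : ∀ i : Fin (minGen G), ∃ x ∈ s ⟨i + 1, by omega⟩, x ∉ s ⟨i, by omega⟩ :=
    fun i => SetLike.exists_of_lt (hlt _ _ (by omega) _)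
  choose x hx hx' using hex
  have hle : ∀ i : Fin (minGen G + 1), partialClosure x i ≤ s ⟨i, by omega⟩ := by
    intro i
    rw [partialClosure, closure_le]
    rintro _ ⟨j, hj, rfl⟩
    exact s.strictMono.monotone (a := ⟨j + 1, _⟩) (b := ⟨i, _⟩) hj (hx j)
  have hmono : StrictMono (partialClosure x) := by
    rw [Fin.strictMono_iff_lt_succ]
    intro i
    refine SetLike.lt_iff_le_and_exists.2 ⟨closure_mono (Set.image_mono fun j hj => ?_), x i,
      subset_closure ⟨i, by simp, rfl⟩, fun hi => hx' i (hle _ hi)⟩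
    exact Nat.lt_succ_of_lt hj
  have htop := h.2 x hmono
  have := hlt (minGen G) (minGen G + 1) (by omega) (by omega)
  refine not_top_lt (this.trans_le' ?_ |>.trans_le le_top)
  rw [← htop, closure_le]
  rintro _ ⟨j, rfl⟩
  exact s.strictMono.monotone (a := ⟨j + 1, _⟩) (b := ⟨minGen G, _⟩) j.2 (hx j)

theorem minGen_le_card {S : Finset G} (hS : closure (S : Set G) = ⊤) :
    minGen G ≤ S.card :=
  Nat.sInf_le ⟨S, rfl, hS⟩

theorem UniformlyGenerated.height_closure_le (h : UniformlyGenerated G)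
    (S : Finset G) : Order.height (closure (S : Set G)) ≤ S.card := by
  classical
  by_cases htop : closure (S : Set G) = ⊤
  · rw [htop]
    exact h.height_top_le.trans (by exact_mod_cast minGen_le_card htop)
  by_cases hcard : minGen G ≤ S.card
  · exact (Order.height_mono le_top).trans (h.height_top_le.trans (by exact_mod_cast hcard))
  obtain ⟨g, -, hg⟩ := SetLike.exists_of_lt (lt_top_iff_ne_top.2 htop)
  have hgS : g ∉ S := fun hm => hg (subset_closure hm)
  have hlt : closure (S : Set G) < closure ((insert g S : Finset G) : Set G) :=
    SetLike.lt_iff_le_and_exists.2 ⟨closure_mono (by simp), g, subset_closure (by simp), hg⟩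
  have hrec := h.height_closure_le (insert g S)
  rw [Finset.card_insert_of_notMem hgS] at hrec
  have := (Order.height_add_one_le hlt).trans hrec
  push_cast at this
  exact (ENat.add_le_add_iff_right (by simp)).1 this
termination_by minGen G - S.card
decreasing_by classical rw [Finset.card_insert_of_notMem hgS]; omega

theorem natCast_add_one_le_height_of_lt {A B : Subgroup G} {n : ℕ}
    (h : (n : ℕ∞) ≤ Order.height A) (hAB : A < B) :
    ((n + 1 : ℕ) : ℕ∞) ≤ Order.height B := by
  refine le_trans ?_ (Order.height_add_one_le hAB)
  push_cast
  gcongr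

theorem UniformlyGenerated.orderOf_prime [Finite G] (h : UniformlyGenerated G) {x : G}
    (hx : x ≠ 1) : (orderOf x).Prime := by
  have h1 : orderOf x ≠ 1 := by rwa [Ne, orderOf_eq_one_iff]
  have hp := Nat.minFac_prime h1
  have hd := Nat.minFac_dvd (orderOf x)
  set p := (orderOf x).minFac
  obtain ⟨y, hy, hyo⟩ : ∃ y ∈ zpowers x, orderOf y = p := by
    refine ⟨x ^ (orderOf x / p), npow_mem_zpowers _ _, ?_⟩
    rw [orderOf_pow_orderOf_div (orderOf_pos x).ne' hd]
  have hle : zpowers y ≤ zpowers x := by simpa using hy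
  rcases hle.eq_or_lt with he | hlt
  · rw [← Nat.card_zpowers, ← he, Nat.card_zpowers, hyo]
    exact hp
  · exfalso
    have hb : ⊥ < zpowers y := by
      rw [bot_lt_iff_ne_bot, Ne, zpowers_eq_bot]
      rintro rfl
      rw [orderOf_one] at hyo
      exact hp.ne_one hyo.symm
    have h2 := natCast_add_one_le_height_of_lt
      (natCast_add_one_le_height_of_lt (n := 0) (by simp) hb) hlt
    have h3 := h.height_closure_le {x}
    rw [Finset.coe_singleton, ← zpowers_eq_closure] at h3
    have := h2.trans h3
    norm_num at this

theorem UniformlyGenerated.cardFactors_pair [Finite G] (h : UniformlyGenerated G) (x y : G) :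
    cardFactors (Nat.card (closure {x, y})) ≤ 2 := by
  classical
  apply cardFactors_card_le_two_of_forall_lt_eq_top
  intro A B hA hAB
  by_contra hB
  have hmap : StrictMono (Subgroup.map (closure {x, y}).subtype) :=
    fun _ _ => (map_lt_map_iff_of_injective (subtype_injective _)).2
  have h1 := natCast_add_one_le_height_of_lt (n := 0) (by simp) (hmap hA)
  have h2 := natCast_add_one_le_height_of_lt h1 (hmap hAB)
  have h3 := natCast_add_one_le_height_of_lt h2 (hmap (lt_top_iff_ne_top.2 hB))
  have h4 := h.height_closure_le {x, y}
  rw [← MonoidHom.range_eq_map, range_subtype] at h3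
  rw [Finset.coe_pair] at h4
  have := (h3.trans h4).trans (Nat.cast_le.2 Finset.card_le_two)
  norm_num at this

theorem disjoint_zpowers_of_notMem {H : Subgroup G} {y : G} (hy : (orderOf y).Prime)
    (hn : y ∉ H) : Disjoint H (zpowers y) := by
  have : Fact (Nat.card (zpowers y)).Prime := ⟨by rwa [Nat.card_zpowers]⟩
  rcases (H.subgroupOf (zpowers y)).eq_bot_or_eq_top_of_prime_card with h | h
  · exact subgroupOf_eq_bot.1 h
  · exact absurd (subgroupOf_eq_top.1 h (mem_zpowers y)) hn

theorem mul_self_le_card_of_notMem_zpowers [Finite G] {p : ℕ} (hp : p.Prime) {x y : G}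
    (hx : orderOf x = p) (hy : orderOf y = p) (hn : y ∉ zpowers x) {K : Subgroup G}
    (hxK : x ∈ K) (hyK : y ∈ K) :
    p * p ≤ Nat.card K := by
  have hinj := mul_injective_of_disjoint (disjoint_zpowers_of_notMem (hy ▸ hp) hn)
  have : Function.Injective (fun g : zpowers x × zpowers y =>
     (⟨g.1 * g.2, K.mul_mem ((zpowers_le.2 hxK) g.1.2) ((zpowers_le.2 hyK) g.2.2)⟩ : K)) :=
    fun a b hab => hinj (congrArg Subtype.val hab)
  have := Nat.card_le_card_of_injective _ this
  rwa [Nat.card_prod, Nat.card_zpowers, Nat.card_zpowers, hx, hy] at this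

theorem UniformlyGenerated.exists_card_eq [Finite G] (h : UniformlyGenerated G) {x y : G} {p : ℕ}
    (hp : p.Prime) (hx : orderOf x = p) :
    ∃ m, Nat.card (closure {x, y}) = p * m ∧ (m = 1 ∨ m.Prime) := by
  have hd : p ∣ Nat.card (closure {x, y}) := by
    rw [← hx]
    exact orderOf_dvd_natCard _ (subset_closure (by simp))
  obtain ⟨m, hm⟩ := hd
  refine ⟨m, hm, ?_⟩
  have h2 := h.cardFactors_pair x y
  have hm0 : m ≠ 0 := by
    rintro rfl
    exact Nat.card_pos.ne' hm
  rw [hm, cardFactors_mul hp.ne_zero hm0, cardFactors_apply_prime hp] at h2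
  rcases (show cardFactors m = 0 ∨ cardFactors m = 1 by omega) with h0 | h1
  · left
    simpa [hm0] using h0
  · right
    exact cardFactors_eq_one_iff_prime.1 h1

theorem UniformlyGenerated.mul_comm_of_orderOf [Finite G] (h : UniformlyGenerated G) {p : ℕ}
    (hp : p.Prime) (hmax : ∀ q, q.Prime → q ∣ Nat.card G → q ≤ p) {x y : G}
    (hx : orderOf x = p) (hy : orderOf y = p) : x * y = y * x := by
  by_cases hn : y ∈ zpowers x
  · obtain ⟨k, rfl⟩ := hn
    exact ((Commute.refl x).zpow_right k).eq
  have hxK : x ∈ closure {x, y} := subset_closure (by simp)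
  have hyK : y ∈ closure {x, y} := subset_closure (by simp)
  have hle := mul_self_le_card_of_notMem_zpowers hp hx hy hn hxK hyK
  obtain ⟨m, hm, hm'⟩ := h.exists_card_eq (y := y) hp hx
  rw [hm] at hle
  have hpm : p ≤ m := Nat.le_of_mul_le_mul_left hle hp.pos
  have hmp : m.Prime := hm'.resolve_left fun h1 => by have := hp.two_le; omega
  have hmle := hmax m hmp ((Dvd.intro_left _ hm.symm).trans (card_subgroup_dvd_card _))
  obtain rfl : m = p := le_antisymm hmle hpm
  have : Fact m.Prime := ⟨hp⟩
  have := IsPGroup.isMulCommutative_of_card_eq_prime_sq (hm.trans (sq m).symm)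
  exact congrArg Subtype.val (mul_comm' (⟨x, hxK⟩ : closure {x, y}) ⟨y, hyK⟩)

theorem UniformlyGenerated.conj_mem_zpowers [Finite G] (h : UniformlyGenerated G) {p : ℕ}
    (hp : p.Prime) (hmax : ∀ q, q.Prime → q ∣ Nat.card G → q ≤ p) {x : G}
    (hx : orderOf x = p) (g : G) : g * x * g⁻¹ ∈ zpowers x := by
  by_contra hn
  have hg1 : g ≠ 1 := by
    rintro rfl
    simp at hn
  have hq := h.orderOf_prime hg1
  by_cases hqp : orderOf g = p
  · rw [h.mul_comm_of_orderOf hp hmax hqp hx] at hn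
    simp at hn
  have hxK : x ∈ closure {x, g} := subset_closure (by simp)
  have hgK : g ∈ closure {x, g} := subset_closure (by simp)
  have hy : orderOf (g * x * g⁻¹) = p := by
    rw [← hx]
    exact orderOf_injective (MulAut.conj g).toMonoidHom (MulAut.conj g).injective x
  have hle := mul_self_le_card_of_notMem_zpowers hp hx hy hn hxK
    (mul_mem (mul_mem hgK hxK) (inv_mem hgK))
  obtain ⟨m, hm, hm'⟩ := h.exists_card_eq (y := g) hp hx
  have hd : orderOf g ∣ p * m := hm ▸ orderOf_dvd_natCard _ hgK
  have hdm : orderOf g ∣ m :=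
    Nat.Coprime.dvd_of_dvd_mul_left ((Nat.coprime_primes hq hp).2 hqp) hd
  have hgm : orderOf g = m := by
    rcases hm' with rfl | hm'
    · exact absurd (Nat.dvd_one.1 hdm) hq.ne_one
    · exact (Nat.prime_dvd_prime_iff_eq hq hm').1 hdm
  have hgp := hmax _ hq (orderOf_dvd_natCard g)
  rw [hm] at hle
  have := Nat.le_of_mul_le_mul_left hle hp.pos
  omega

theorem isElementaryAbelian_of_pow_eq_one [Finite G] {p : ℕ} (hp : p.Prime)
    (hcomm : ∀ a b : G, a * b = b * a) (hpow : ∀ a : G, a ^ p = 1) : IsElementaryAbelian G := by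
  let _ : CommGroup G := { ‹Group G› with mul_comm := hcomm }
  have : Fact p.Prime := ⟨hp⟩
  let _ : Module (ZMod p) (Additive G) :=
    AddCommGroup.zmodModule (n := p) (G := Additive G) hpow
  let b := Module.finBasis (ZMod p) (Additive G)
  exact ⟨p, _, hp, ⟨(AddEquiv.toMultiplicativeRight b.equivFun.toAddEquiv).trans
    (MulEquiv.piMultiplicative _)⟩⟩

/-- An element normalizing every cyclic subgroup of an elementary abelian `p`-group acts on it as a
scalar. -/
theorem conj_eq_pow_of_forall_mem_zpowers [Finite G] {p : ℕ} (hp : p.Prime) {N : Subgroup G}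
    (hcomm : ∀ a ∈ N, ∀ b ∈ N, a * b = b * a) (hpow : ∀ a ∈ N, a ^ p = 1) {g x : G}
    (hg : ∀ y ∈ N, g * y * g⁻¹ ∈ zpowers y) (hx : x ∈ N) (hx1 : x ≠ 1) {c : ℕ}
    (hc : g * x * g⁻¹ = x ^ c) {y : G} (hy : y ∈ N) : g * y * g⁻¹ = y ^ c := by
  by_cases hyx : y ∈ zpowers x
  · obtain ⟨k, rfl⟩ := hyx
    simp only
    rw [← conj_zpow, hc, ← zpow_natCast, ← zpow_natCast, zpow_comm]
  have hy1 : y ≠ 1 := by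
    rintro rfl
    exact hyx (one_mem _)
  have : Fact p.Prime := ⟨hp⟩
  have hxo := orderOf_eq_prime (hpow x hx) hx1
  have hyo := orderOf_eq_prime (hpow y hy) hy1
  have hdisj := disjoint_zpowers_of_notMem (hyo ▸ hp) hyx
  obtain ⟨e, he⟩ := hg _ (mul_mem hx hy)
  obtain ⟨f, hf⟩ := hg _ hy
  have hcxy : Commute x y := hcomm x hx y hy
  simp only at he hf
  have hprod : x ^ e * y ^ e = x ^ c * y ^ f := by
    rw [← hcxy.mul_zpow, he, hf, ← hc]
    group
  have hkey := mul_injective_of_disjoint hdisj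
    (a₁ := (⟨x ^ e, zpow_mem (mem_zpowers x) e⟩, ⟨y ^ e, zpow_mem (mem_zpowers y) e⟩))
    (a₂ := (⟨x ^ c, pow_mem (mem_zpowers x) c⟩, ⟨y ^ f, zpow_mem (mem_zpowers y) f⟩)) hprod
  rw [Prod.mk.injEq, Subtype.mk.injEq, Subtype.mk.injEq] at hkey
  obtain ⟨h1, h2⟩ := hkey
  rw [← hf, ← h2, ← zpow_natCast, zpow_eq_zpow_iff_modEq, hyo]
  rwa [← zpow_natCast, zpow_eq_zpow_iff_modEq, hxo] at h1

theorem UniformlyGenerated.isElementaryAbelian_or_isScalarExtension [Finite G]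
    (h : UniformlyGenerated G) : IsElementaryAbelian G ∨ IsScalarExtension G := by
  rcases subsingleton_or_nontrivial G with hs | hs
  · exact .inl (isElementaryAbelian_of_pow_eq_one Nat.prime_two
      (fun _ _ => Subsingleton.elim _ _) fun _ => Subsingleton.elim _ _)
  have hcard : 1 < Nat.card G := Finite.one_lt_card
  obtain ⟨p, hpmem, hpmax⟩ := (Nat.card G).primeFactors.exists_max_image id
    (Nat.nonempty_primeFactors.2 hcard)
  have hp := Nat.prime_of_mem_primeFactors hpmem
  have hmax : ∀ q, q.Prime → q ∣ Nat.card G → q ≤ p := fun q hq hqd =>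
    hpmax q (Nat.mem_primeFactors.2 ⟨hq, hqd, Nat.card_pos.ne'⟩)
  have : Fact p.Prime := ⟨hp⟩
  have hcomm : ∀ a b : G, a ^ p = 1 → b ^ p = 1 → a * b = b * a := by
    intro a b ha hb
    by_cases ha1 : a = 1
    · simp [ha1]
    by_cases hb1 : b = 1
    · simp [hb1]
    exact h.mul_comm_of_orderOf hp hmax (orderOf_eq_prime ha ha1) (orderOf_eq_prime hb hb1)
  let N : Subgroup G :=
    { carrier := {a | a ^ p = 1}
      mul_mem' := fun {a b} ha hb => by
        have : Commute a b := hcomm a b ha hb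
        simp only [Set.mem_ofPred_eq] at ha hb ⊢
        rw [this.mul_pow, ha, hb, one_mul]
      one_mem' := one_pow p
      inv_mem' := fun {a} ha => by
        simp only [Set.mem_ofPred_eq] at ha ⊢
        rw [inv_pow, ha, inv_one] }
  have hNmem : ∀ a, a ∈ N ↔ a ^ p = 1 := fun _ => Iff.rfl
  by_cases hNtop : N = ⊤
  · have hall : ∀ a : G, a ^ p = 1 := fun a => (hNmem a).1 (hNtop ▸ mem_top a)
    exact .inl (isElementaryAbelian_of_pow_eq_one hp (fun a b => hcomm a b (hall a) (hall b)) hall)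
  right
  have hconj : ∀ (g : G), ∀ y ∈ N, g * y * g⁻¹ ∈ zpowers y := by
    intro g y hy
    by_cases hy1 : y = 1
    · simp [hy1]
    exact h.conj_mem_zpowers hp hmax (orderOf_eq_prime hy hy1) g
  have hNnorm : N.Normal := ⟨fun y hy g => zpowers_le.2 hy (hconj g y hy)⟩
  obtain ⟨x, hx⟩ := exists_prime_orderOf_dvd_card' (G := G) p (Nat.dvd_of_mem_primeFactors hpmem)
  have hxN : x ∈ N := by rw [hNmem, ← hx, pow_orderOf_eq_one]
  have hx1 : x ≠ 1 := by
    rintro rfl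
    rw [orderOf_one] at hx
    exact hp.ne_one hx.symm
  have hcent : ∀ g : G, Commute g x → g ∈ N := by
    intro g hg
    by_contra hgN
    have hg1 : g ≠ 1 := fun h1 => hgN (h1 ▸ one_mem N)
    have hq := h.orderOf_prime hg1
    have hne : orderOf g ≠ p := fun hgp => hgN (by rw [hNmem, ← hgp, pow_orderOf_eq_one])
    have hmul := hg.orderOf_mul_eq_mul_orderOf_of_coprime
      (by rw [hx]; exact (Nat.coprime_primes hq hp).2 hne)
    have hgx1 : g * x ≠ 1 := by
      intro h1
      rw [h1, orderOf_one, hx] at hmul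
      exact hp.ne_one (Nat.eq_one_of_mul_eq_one_left hmul.symm)
    have := h.orderOf_prime hgx1
    rw [hmul, hx] at this
    exact Nat.not_prime_mul hq.ne_one hp.ne_one this
  have hZ : (zpowers x).Normal := by
    refine ⟨fun y hy g => ?_⟩
    obtain ⟨k, rfl⟩ := hy
    simp only
    rw [← conj_zpow]
    exact zpow_mem (hconj g x hxN) k
  have hZc : (Nat.card (zpowers x)) = p := by rw [Nat.card_zpowers, hx]
  let f : G →* MulAut (zpowers x) := MulAut.conjNormal
  have hker : ∀ g, f g = 1 → g ∈ N := by
    intro g hg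
    apply hcent
    have := congrArg Subtype.val (DFunLike.congr_fun hg ⟨x, mem_zpowers x⟩)
    simp only [f, MulAut.conjNormal_apply, MulAut.one_apply] at this
    exact mul_inv_eq_iff_eq_mul.1 this
  have hcyc : IsCyclic (MulAut (zpowers x)) := by
    have : IsCyclic (ZMod (Nat.card (zpowers x)))ˣ := by rw [hZc]; infer_instance
    exact isCyclic_of_surjective (IsCyclic.mulAutMulEquiv (zpowers x)).symm
      (IsCyclic.mulAutMulEquiv (zpowers x)).symm.surjective
  obtain ⟨⟨_, g, rfl⟩, hgen⟩ := IsCyclic.exists_generator (α := f.range)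
  have hsup : N ⊔ zpowers g = ⊤ := by
    rw [eq_top_iff]
    intro a _
    obtain ⟨k, hk⟩ := hgen ⟨f a, a, rfl⟩
    have hk' : f g ^ k = f a := congrArg Subtype.val hk
    have hmem : a * (g ^ k)⁻¹ ∈ N :=
      hker _ (by rw [map_mul, map_inv, map_zpow, hk', mul_inv_cancel])
    have := mul_mem_sup hmem (zpow_mem (mem_zpowers g) k)
    rwa [inv_mul_cancel_right] at this
  have hgN : g ∉ N := by
    intro hgN
    rw [sup_eq_left.2 (zpowers_le.2 hgN)] at hsup
    exact hNtop hsup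
  have hg1 : g ≠ 1 := fun h1 => hgN (h1 ▸ one_mem N)
  obtain ⟨c, hc⟩ := (mem_powers_iff_mem_zpowers (x := x)).2 (hconj g x hxN)
  simp only at hc
  have hscalar : ∀ n ∈ N, g * n * g⁻¹ = n ^ c := fun n hn =>
    conj_eq_pow_of_forall_mem_zpowers hp (fun a ha b hb => hcomm a b ha hb) (fun a ha => ha)
      (hconj g) hxN hx1 hc.symm hn
  have hiter : ∀ k, g ^ k * x * (g ^ k)⁻¹ = x ^ (c ^ k) := by
    intro k
    induction k with
    | zero => simp
    | succ k ih =>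
      rw [pow_succ c, pow_mul, ← hscalar _ (pow_mem hxN _), ← ih]
      group
  refine ⟨p, orderOf g, hp, h.orderOf_prime hg1, N, g, c, hNnorm,
    fun a ha b hb => hcomm a b ha hb, fun a ha => ha, rfl, hsup, ?_, hscalar, ?_, ?_⟩
  · rw [← disjoint_iff]
    exact disjoint_zpowers_of_notMem (h.orderOf_prime hg1) hgN
  · intro hc1
    refine hgN (hcent g ?_)
    have : x ^ c = x := by
      conv_rhs => rw [← pow_one x]
      rw [pow_eq_pow_iff_modEq, hx]
      exact hc1
    rw [this] at hc
    exact (mul_inv_eq_iff_eq_mul.1 hc.symm)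
  · have := hiter (orderOf g)
    rw [pow_orderOf_eq_one] at this
    have h2 : x ^ 1 = x ^ c ^ orderOf g := by simpa using this
    rw [pow_eq_pow_iff_modEq, hx] at h2
    exact h2.symm

theorem cardFactors_card_lt_of_lt [Finite G] {H K : Subgroup G} (h : H < K) :
    cardFactors (Nat.card H) < cardFactors (Nat.card K) := by
  have hr1 : H.relIndex K ≠ 1 := fun h1 => h.not_ge (relIndex_eq_one.1 h1)
  have hcard : Nat.card H * H.relIndex K = Nat.card K := by
    rw [← relIndex_bot_left, ← relIndex_bot_left, relIndex_mul_relIndex _ _ _ bot_le h.le]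
  have hr0 : H.relIndex K ≠ 0 := by
    intro h0
    rw [h0, mul_zero] at hcard
    exact Nat.card_pos.ne hcard
  have : cardFactors (H.relIndex K) ≠ 0 := by
    rw [Ne, cardFactors_eq_zero_iff_eq_zero_or_one]
    exact not_or.2 ⟨hr0, hr1⟩
  rw [← hcard, cardFactors_mul Nat.card_pos.ne' hr0]
  omega

theorem cardFactors_card_sup_le [Finite G] (H K : Subgroup G) [H.Normal] :
    cardFactors (Nat.card (H ⊔ K : Subgroup G)) ≤
      cardFactors (Nat.card H) + cardFactors (Nat.card K) := by
  have hcard : Nat.card H * H.relIndex K = Nat.card (H ⊔ K : Subgroup G) := by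
    rw [← relIndex_sup_left, ← relIndex_bot_left, ← relIndex_bot_left,
      relIndex_mul_relIndex _ _ _ bot_le le_sup_left]
  obtain ⟨m, hm⟩ := H.relIndex_dvd_card K
  have h0 : H.relIndex K * m ≠ 0 := hm ▸ Nat.card_pos.ne'
  rw [← hcard, hm, cardFactors_mul Nat.card_pos.ne' (left_ne_zero_of_mul h0),
    cardFactors_mul (left_ne_zero_of_mul h0) (right_ne_zero_of_mul h0)]
  omega

theorem exists_finset_card_eq_minGen [Finite G] :
    ∃ S : Finset G, S.card = minGen G ∧ closure (S : Set G) = ⊤ := by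
  have := Fintype.ofFinite G
  exact Nat.sInf_mem (s := {n | ∃ S : Finset G, S.card = n ∧ closure (S : Set G) = ⊤})
    ⟨_, Finset.univ, rfl, by simp⟩

theorem exists_strictMono_partialClosure [Finite G] :
    ∃ x : Fin (minGen G) → G, StrictMono (partialClosure x) := by
  classical
  obtain ⟨S, hcard, hS⟩ := exists_finset_card_eq_minGen (G := G)
  let e := S.equivFinOfCardEq hcard
  refine ⟨fun i => e.symm i, Fin.strictMono_iff_lt_succ.2 fun i => ?_⟩
  have hle : partialClosure (fun i => (e.symm i : G)) i.castSucc ≤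
      partialClosure (fun i => (e.symm i : G)) i.succ :=
    closure_mono (Set.image_mono fun j hj => Nat.lt_succ_of_lt hj)
  refine SetLike.lt_iff_le_and_exists.2
    ⟨hle, e.symm i, subset_closure ⟨i, by simp, rfl⟩, fun hi => ?_⟩
  have hsub : partialClosure (fun i => (e.symm i : G)) i.castSucc ≤
      closure (S.erase (e.symm i) : Set G) := by
    refine closure_mono ?_
    rintro _ ⟨j, hj, rfl⟩
    have hji : j ≠ i := by
      rintro rfl
      simp at hj
    simpa [Subtype.val_inj] using hji
  have htop : closure (S.erase (e.symm i) : Set G) = ⊤ := by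
    rw [eq_top_iff, ← hS, closure_le]
    intro s hs
    by_cases hse : s = e.symm i
    · exact hse ▸ hsub hi
    · exact subset_closure (by simpa [hse] using hs)
  have h1 := minGen_le_card htop
  have h2 := Finset.card_erase_lt_of_mem (e.symm i).2
  omega

/-- If adjoining one element adds at most one prime factor to the order of a subgroup, then the
group is uniformly generated. -/
theorem uniformlyGenerated_of_cardFactors_le [Finite G]
    (h : ∀ (H : Subgroup G) (a : G),
      cardFactors (Nat.card (H ⊔ zpowers a : Subgroup G)) ≤ cardFactors (Nat.card H) + 1) :
    UniformlyGenerated G := by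
  classical
  refine ⟨exists_strictMono_partialClosure, fun x hx => ?_⟩
  have hgen : ∀ S : Finset G, cardFactors (Nat.card (closure (S : Set G))) ≤ S.card := by
    intro S
    induction S using Finset.induction_on with
    | empty => simp
    | insert a S ha ih =>
      rw [Finset.coe_insert, Set.insert_eq, Set.union_comm, Subgroup.closure_union,
        ← zpowers_eq_closure, Finset.card_insert_of_notMem ha]
      exact (h _ _).trans (by gcongr)
  obtain ⟨S, hcard, hS⟩ := exists_finset_card_eq_minGen (G := G)
  have htop := hgen S
  rw [hS, hcard] at htop
  have hchain : ∀ i : Fin (minGen G + 1), (i : ℕ) ≤ cardFactors (Nat.card (partialClosure x i)) := by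
    intro i
    induction i using Fin.induction with
    | zero => simp
    | succ i ih => exact ih.trans_lt (cardFactors_card_lt_of_lt (hx i.castSucc_lt_succ))
  have hlast : partialClosure x (Fin.last _) = closure (Set.range x) := by
    simp [partialClosure, ← Set.image_univ]
  rw [← hlast]
  by_contra hne
  have h1 := cardFactors_card_lt_of_lt (lt_top_iff_ne_top.2 hne)
  have h2 := hchain (Fin.last _)
  rw [Fin.val_last] at h2
  omega

theorem cardFactors_card_zpowers_le {a : G} {p : ℕ} (hp : p.Prime) (ha : a ^ p = 1) :
    cardFactors (Nat.card (zpowers a)) ≤ 1 := by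
  rw [Nat.card_zpowers]
  rcases (Nat.dvd_prime hp).1 (orderOf_dvd_of_pow_eq_one ha) with h | h
  · simp [h]
  · rw [h, cardFactors_apply_prime hp]

theorem IsElementaryAbelian.uniformlyGenerated [Finite G] (h : IsElementaryAbelian G) :
    UniformlyGenerated G := by
  obtain ⟨p, k, hp, ⟨e⟩⟩ := h
  have hcomm : ∀ a b : G, a * b = b * a := fun a b => e.injective (by simp [mul_comm])
  have hpow : ∀ a : G, a ^ p = 1 := fun a => e.injective (by
    rw [map_pow, map_one]
    ext i
    rw [Pi.pow_apply, Pi.one_apply]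
    exact (nsmul_eq_mul p (Multiplicative.toAdd (e a i))).trans (by simp))
  let _ : CommGroup G := { ‹Group G› with mul_comm := hcomm }
  refine uniformlyGenerated_of_cardFactors_le fun H a => ?_
  exact (cardFactors_card_sup_le _ _).trans
    (Nat.add_le_add_left (cardFactors_card_zpowers_le hp (hpow a)) _)

theorem IsScalarExtension.uniformlyGenerated [Finite G] (h : IsScalarExtension G) :
    UniformlyGenerated G := by
  obtain ⟨p, q, hp, hq, N, g, c, hN, hcomm, hpow, hg, hsup, hinf, hscalar, hc, -⟩ := h
  have hindex : N.index = q := by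
    rw [← relIndex_top_right, ← hsup, relIndex_sup_left, ← inf_relIndex_right, hinf,
      relIndex_bot_left, Nat.card_zpowers, hg]
  have hmax : ∀ H : Subgroup G, ¬ H ≤ N → N ⊔ H = ⊤ := by
    intro H hH
    have hd := relIndex_mul_index (le_sup_left : N ≤ N ⊔ H)
    rw [hindex, relIndex_sup_left] at hd
    rcases (Nat.dvd_prime hq).1 (Dvd.intro _ hd) with h1 | h1
    · exact absurd (relIndex_eq_one.1 h1) hH
    · rw [h1] at hd
      exact index_eq_one.1 (Nat.eq_of_mul_eq_mul_left hq.pos (hd.trans (mul_one q).symm))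
  have hnormal : ∀ H : Subgroup G, H ≤ N → H.Normal := by
    intro H hH
    rw [← normalizer_eq_top_iff, eq_top_iff, ← hsup, sup_le_iff, zpowers_le]
    have hle : ∀ a, (∀ x ∈ H, a * x * a⁻¹ ∈ H) → a ∈ normalizer (H : Set G) := by
      intro a ha
      exact mem_normalizer_fintype ha
    refine ⟨fun a ha => hle a fun x hx => ?_, hle g fun x hx => ?_⟩
    · rwa [hcomm a ha x (hH hx), mul_inv_cancel_right]
    · rw [hscalar x (hH hx)]
      exact pow_mem hx c
  have hpowq : ∀ a, a ∉ N → a ^ q = 1 := by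
    intro a ha
    have hmem : a ^ q ∈ N := hindex ▸ N.pow_index_mem a
    have hcen : centralizer {a ^ q} = ⊤ := by
      rw [eq_top_iff, ← hmax (zpowers a) (by simpa using ha), sup_le_iff, zpowers_le]
      refine ⟨fun n hn => mem_centralizer_singleton_iff.2 (hcomm _ hn _ hmem),
        mem_centralizer_singleton_iff.2 ?_⟩
      exact (Commute.refl a).pow_right q
    have hgc := mem_centralizer_singleton_iff.1 (hcen ▸ mem_top g)
    have hfix := hscalar _ hmem
    rw [hgc, mul_inv_cancel_right] at hfix
    by_contra hne
    have : Fact p.Prime := ⟨hp⟩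
    have ho := orderOf_eq_prime (hpow _ hmem) hne
    generalize a ^ q = b at *
    have hfix' : b ^ 1 = b ^ c := by rwa [pow_one]
    rw [pow_eq_pow_iff_modEq, ho] at hfix'
    exact hc hfix'.symm
  refine uniformlyGenerated_of_cardFactors_le fun H a => ?_
  by_cases hH : H ≤ N
  · have := hnormal H hH
    refine (cardFactors_card_sup_le _ _).trans (Nat.add_le_add_left ?_ _)
    by_cases ha : a ∈ N
    · exact cardFactors_card_zpowers_le hp (hpow a ha)
    · exact cardFactors_card_zpowers_le hq (hpowq a ha)
  · obtain ⟨n, hn, b, hb, rfl⟩ := mem_sup_of_normal_left.1 (hmax H hH ▸ mem_top a)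
    have hle : H ⊔ zpowers (n * b) ≤ zpowers n ⊔ H := by
      rw [sup_le_iff, zpowers_le]
      exact ⟨le_sup_right, mul_mem_sup (mem_zpowers n) hb⟩
    have := hnormal (zpowers n) (zpowers_le.2 hn)
    have h1 := cardFactors_card_sup_le (zpowers n) H
    have h2 := cardFactors_card_zpowers_le hp (hpow n hn)
    have h3 : cardFactors (Nat.card (H ⊔ zpowers (n * b) : Subgroup G)) ≤
        cardFactors (Nat.card (zpowers n ⊔ H : Subgroup G)) := by
      rcases hle.eq_or_lt with he | hlt
      · rw [he]
      · exact (cardFactors_card_lt_of_lt hlt).le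
    omega

end

/-- Main Theorem: a finite group is uniformly generated iff it is
elementary abelian `(C_p)^d`, or of the form `(C_p)^{d-1} ⋊ C_q` with `C_q` acting
as a nontrivial scalar. -/
theorem uniformlyGenerated_iff (G : Type*) [Group G] [Finite G] :
    UniformlyGenerated G ↔ IsElementaryAbelian G ∨ IsScalarExtension G := by
  exact ⟨UniformlyGenerated.isElementaryAbelian_or_isScalarExtension, fun h =>
    h.elim IsElementaryAbelian.uniformlyGenerated IsScalarExtension.uniformlyGenerated⟩
end
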